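/- Let U be a finite set with |U| = n and w : U → (0,∞) a positive weight function with total weight W = Σ_{a∈U} w(a). Let a₁, …, a_m (m ≥ 2) be i.i.d. proportional samples, and let Z = C(m,2)^{-1} · Σ_{1 ≤ i < j ≤ m} Y_{ij}, where Y_{ij} = 1/w(a_i) if a_i = a_j and Y_{ij} = 0 otherwise. Then E[Z] = 1/W, i.e., the reciprocal 1/Ŵ of the estimate Ŵ = 1/Z is an unbiased estimator of 1/W. -/

import Mathlib

open MeasureTheory ProbabilityTheory

/-!
Two independent proportional samples both equal `x` with probability `(w x / W) ^ 2`, so a pair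
contributes `∑ x, (w x / W) ^ 2 / w x = ∑ x, w x / W ^ 2 = 1 / W` in expectation, and averaging over
pairs preserves this value.

The joint law is given as the outer measures of possibly non-measurable fibers. These already add up
to the total mass, which leaves no room for non-measurability: the samples are a.e. measurable and
their joint law is a product measure.
-/

section Fibers

variable {Ω V : Type*} [MeasurableSpace Ω] {μ : Measure Ω}

theorem nullMeasurableSet_of_measure_add_measure_compl_le [IsFiniteMeasure μ] {s : Set Ω}
    (h : μ s + μ sᶜ ≤ μ Set.univ) : NullMeasurableSet s μ := by
  set t := toMeasurable μ sᶜ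
  have htmeas : MeasurableSet t := measurableSet_toMeasurable μ sᶜ
  have hsub : tᶜ ⊆ s := Set.compl_subset_comm.1 (subset_toMeasurable μ sᶜ)
  have hle : μ s ≤ μ tᶜ := by
    rw [measure_compl htmeas (measure_ne_top μ t), measure_toMeasurable]
    exact ENNReal.le_sub_of_add_le_right (measure_ne_top μ sᶜ) h
  exact htmeas.compl.nullMeasurableSet.congr <|
    ae_eq_of_subset_of_measure_ge hsub hle htmeas.compl.nullMeasurableSet (measure_ne_top μ s)

variable [Countable V] [MeasurableSpace V] [MeasurableSingletonClass V] {ν : Measure V} {X : Ω → V}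

theorem measure_preimage_le_of_measure_fiber_le (h : ∀ v, μ (X ⁻¹' {v}) ≤ ν {v}) (s : Set V) :
    μ (X ⁻¹' s) ≤ ν s :=
  calc μ (X ⁻¹' s) = μ (⋃ v ∈ s, X ⁻¹' {v}) := by
        rw [← Set.preimage_iUnion₂, Set.biUnion_of_singleton]
    _ ≤ ∑' v : s, μ (X ⁻¹' {v.1}) := measure_biUnion_le μ s.to_countable _
    _ ≤ ∑' v : s, ν {v.1} := ENNReal.tsum_le_tsum fun v ↦ h v
    _ = ν s := by
      simpa using tsum_measure_preimage_singleton s.to_countable (f := id) (μ := ν)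
        fun v _ ↦ measurableSet_singleton v

theorem hasLaw_of_measure_fiber_le [IsFiniteMeasure μ] (h : ∀ v, μ (X ⁻¹' {v}) ≤ ν {v})
    (huniv : ν Set.univ ≤ μ Set.univ) : HasLaw X ν μ := by
  have hpre := measure_preimage_le_of_measure_fiber_le h
  have hnull : NullMeasurable X μ := fun s hs ↦
    nullMeasurableSet_of_measure_add_measure_compl_le <|
      calc μ (X ⁻¹' s) + μ (X ⁻¹' s)ᶜ ≤ ν s + ν sᶜ := add_le_add (hpre s) (hpre sᶜ)
        _ = ν Set.univ := measure_add_measure_compl hs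
        _ ≤ μ Set.univ := huniv
  have hX : AEMeasurable X μ := hnull.aemeasurable
  have : IsFiniteMeasure ν := ⟨huniv.trans_lt (measure_lt_top μ _)⟩
  refine ⟨hX, Measure.eq_of_le_of_measure_univ_eq ?_ ?_⟩
  · exact Measure.le_iff.2 fun s hs ↦ (Measure.map_apply_of_aemeasurable hX hs).trans_le (hpre s)
  · rw [Measure.map_apply_of_aemeasurable hX .univ]
    exact (hpre _).antisymm huniv

end Fibers

theorem hasLaw_prodMk_of_hasLaw_pi {Ω ι : Type*} [MeasurableSpace Ω] {μ : Measure Ω} [Fintype ι]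
    {E : ι → Type*} [∀ i, MeasurableSpace (E i)] {ν : ∀ i, Measure (E i)}
    [∀ i, IsProbabilityMeasure (ν i)] {X : ∀ i, Ω → E i}
    (h : HasLaw (fun ω i ↦ X i ω) (Measure.pi ν) μ) {i j : ι} (hij : i ≠ j) :
    HasLaw (fun ω ↦ (X i ω, X j ω)) ((ν i).prod (ν j)) μ := by
  have := h.isProbabilityMeasure
  have hX (k : ι) : HasLaw (X k) (ν k) μ := (measurePreserving_eval ν k).fun_comp_hasLaw h
  exact (((iIndepFun_iff_hasLaw_pi_pi hX).2 h).indepFun hij).hasLaw_prod (hX i) (hX j)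

section Diagonal

variable {U : Type*} [MeasurableSpace U] [MeasurableSingletonClass U] [DecidableEq U]
  {E : Type*} [NormedAddCommGroup E] [NormedSpace ℝ E]

theorem integral_ite_eq [CompleteSpace E] (Q : Measure U) (x : U) (c : E) :
    ∫ y, (if x = y then c else 0) ∂Q = Q.real {x} • c := by
  simpa [Set.indicator_apply, eq_comm] using
    integral_indicator_const (μ := Q) c (measurableSet_singleton x)

variable [Countable U] {P Q : Measure U} {g : U → E}

theorem integrable_prod_ite_eq [IsFiniteMeasure Q]
    (hg : Integrable (fun x ↦ Q.real {x} • g x) P) :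
    Integrable (fun z : U × U ↦ if z.1 = z.2 then g z.1 else 0) (P.prod Q) := by
  refine (integrable_prod_iff .of_discrete).2 ⟨.of_forall fun x ↦ ?_, ?_⟩
  · refine .of_bound .of_discrete ‖g x‖ (.of_forall fun y ↦ ?_)
    split_ifs <;> simp
  · simpa [apply_ite norm, integral_ite_eq, norm_smul, abs_of_nonneg measureReal_nonneg] using
      hg.norm

theorem integral_prod_ite_eq [CompleteSpace E] [SFinite P] [IsFiniteMeasure Q]
    (hg : Integrable (fun x ↦ Q.real {x} • g x) P) :
    ∫ z : U × U, (if z.1 = z.2 then g z.1 else 0) ∂(P.prod Q) = ∫ x, Q.real {x} • g x ∂P := by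
  simp [integral_prod _ (integrable_prod_ite_eq hg), integral_ite_eq]

end Diagonal

section Proportional

variable {U : Type*} [MeasurableSpace U] {w : U → ℝ}

/-- The law of a proportional sample: the point `x` has mass `w x / W`, where `W = ∑' x, w x`. It is
the zero measure when `W = 0`, in particular when `w` is not summable. -/
noncomputable def proportionalMeasure (w : U → ℝ) : Measure U :=
  .sum fun x ↦ ENNReal.ofReal (w x / ∑' y, w y) • .dirac x

theorem isProbabilityMeasure_proportionalMeasure (hw : ∀ x, 0 ≤ w x) (hW : ∑' x, w x ≠ 0) :
    IsProbabilityMeasure (proportionalMeasure w) := by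
  refine HasSum.isProbabilityMeasure_sum_dirac (fun x ↦ div_nonneg (hw x) (tsum_nonneg hw)) ?_
  have hsum : Summable w := by_contra fun h ↦ hW (tsum_eq_zero_of_not_summable h)
  simpa [div_self hW] using hsum.hasSum.div_const (∑' x, w x)

variable [MeasurableSingletonClass U]

theorem proportionalMeasure_singleton (w : U → ℝ) (x : U) :
    proportionalMeasure w {x} = ENNReal.ofReal (w x / ∑' y, w y) :=
  Measure.sum_smul_dirac_singleton

variable [Countable U]

theorem proportionalMeasure_real_singleton_mul_inv_ae_eq (hw : ∀ x, 0 ≤ w x) :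
    ∀ᵐ x ∂proportionalMeasure w,
      (proportionalMeasure w).real {x} * (w x)⁻¹ = (∑' y, w y)⁻¹ := by
  refine ae_iff_of_countable.2 fun x hx ↦ ?_
  have hwx : w x ≠ 0 := fun h ↦ hx (by simp [proportionalMeasure_singleton, h])
  rw [measureReal_def, proportionalMeasure_singleton,
    ENNReal.toReal_ofReal (div_nonneg (hw x) (tsum_nonneg hw))]
  field_simp

theorem integrable_proportionalMeasure_real_singleton_mul_inv
    [IsFiniteMeasure (proportionalMeasure w)] (hw : ∀ x, 0 ≤ w x) :
    Integrable (fun x ↦ (proportionalMeasure w).real {x} * (w x)⁻¹) (proportionalMeasure w) :=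
  (integrable_congr (proportionalMeasure_real_singleton_mul_inv_ae_eq hw)).2 (integrable_const _)

end Proportional

section PairEstimator

variable {Ω U : Type*} [DecidableEq U] {w : U → ℝ}

/-- The estimator `Y` of `1 / W` computed from a pair `(x, y)` of samples. At a point of weight `0`
it takes the junk value `0⁻¹ = 0`, but proportional samples avoid such points almost surely. -/
noncomputable def pairEstimator (w : U → ℝ) (x y : U) : ℝ :=
  if x = y then (w x)⁻¹ else 0

variable [MeasurableSpace Ω] {μ : Measure Ω} [Countable U] [MeasurableSpace U]
  [MeasurableSingletonClass U] {X Y : Ω → U}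

theorem integrable_pairEstimator [IsFiniteMeasure (proportionalMeasure w)]
    (hw : ∀ x, 0 ≤ w x)
    (h : HasLaw (fun ω ↦ (X ω, Y ω)) ((proportionalMeasure w).prod (proportionalMeasure w)) μ) :
    Integrable (fun ω ↦ pairEstimator w (X ω) (Y ω)) μ := by
  have hint := integrable_prod_ite_eq (integrable_proportionalMeasure_real_singleton_mul_inv hw)
  rw [← h.map_eq] at hint
  exact hint.comp_aemeasurable h.aemeasurable

theorem integral_pairEstimator [IsProbabilityMeasure (proportionalMeasure w)]
    (hw : ∀ x, 0 ≤ w x)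
    (h : HasLaw (fun ω ↦ (X ω, Y ω)) ((proportionalMeasure w).prod (proportionalMeasure w)) μ) :
    ∫ ω, pairEstimator w (X ω) (Y ω) ∂μ = (∑' x, w x)⁻¹ := by
  set P := proportionalMeasure w
  calc ∫ ω, pairEstimator w (X ω) (Y ω) ∂μ
      = ∫ z : U × U, pairEstimator w z.1 z.2 ∂(P.prod P) :=
        h.integral_comp (f := fun z ↦ pairEstimator w z.1 z.2) .of_discrete
    _ = ∫ x, P.real {x} * (w x)⁻¹ ∂P :=
        integral_prod_ite_eq (integrable_proportionalMeasure_real_singleton_mul_inv hw)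
    _ = ∫ _, (∑' x, w x)⁻¹ ∂P :=
        integral_congr_ae (proportionalMeasure_real_singleton_mul_inv_ae_eq hw)
    _ = (∑' x, w x)⁻¹ := by simp

end PairEstimator

theorem sum_card_Ioi_fin (m : ℕ) : ∑ i : Fin m, (Finset.Ioi i).card = m.choose 2 := by
  simp_rw [Fin.card_Ioi]
  rw [Fin.sum_univ_eq_sum_range (fun i ↦ m - 1 - i), Finset.sum_range_reflect (fun i ↦ i),
    Finset.sum_range_id, Nat.choose_two_right]

theorem integral_inv_choose_two_smul_sum_Ioi {Ω : Type*} [MeasurableSpace Ω] {μ : Measure Ω}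
    {E : Type*} [NormedAddCommGroup E] [NormedSpace ℝ E] {m : ℕ} (hm : 2 ≤ m)
    {Y : Fin m → Fin m → Ω → E} {c : E} (hint : ∀ i j, i < j → Integrable (Y i j) μ)
    (hY : ∀ i j, i < j → ∫ ω, Y i j ω ∂μ = c) :
    ∫ ω, (m.choose 2 : ℝ)⁻¹ • ∑ i, ∑ j ∈ Finset.Ioi i, Y i j ω ∂μ = c := by
  have hint' (i j : Fin m) (hj : j ∈ Finset.Ioi i) : Integrable (Y i j) μ :=
    hint i j (Finset.mem_Ioi.1 hj)
  have hsum : ∫ ω, ∑ i, ∑ j ∈ Finset.Ioi i, Y i j ω ∂μ = m.choose 2 • c :=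
    calc ∫ ω, ∑ i, ∑ j ∈ Finset.Ioi i, Y i j ω ∂μ
        = ∑ i, ∑ j ∈ Finset.Ioi i, ∫ ω, Y i j ω ∂μ := by
          rw [integral_finsetSum _ fun i _ ↦ integrable_finsetSum _ (hint' i)]
          exact Finset.sum_congr rfl fun i _ ↦ integral_finsetSum _ (hint' i)
      _ = ∑ i : Fin m, ∑ _j ∈ Finset.Ioi i, c :=
          Finset.sum_congr rfl fun i _ ↦ Finset.sum_congr rfl fun j hj ↦
            hY i j (Finset.mem_Ioi.1 hj)
      _ = m.choose 2 • c := by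
          simp_rw [Finset.sum_const]
          rw [← Finset.sum_smul, sum_card_Ioi_fin]
  have hchoose : (m.choose 2 : ℝ) ≠ 0 := Nat.cast_ne_zero.2 (Nat.choose_pos hm).ne'
  rw [integral_smul, hsum, ← Nat.cast_smul_eq_nsmul ℝ, inv_smul_smul₀ hchoose]

section Samples

variable {Ω U : Type*} [MeasurableSpace Ω] {μ : Measure Ω} [Countable U] {w : U → ℝ}

theorem tsum_ne_zero_of_proportional_law [NeZero μ] {ι : Type*} [Fintype ι] [Nonempty ι]
    {a : ι → Ω → U}
    (hlaw : ∀ v : ι → U,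
      μ {ω | ∀ i, a i ω = v i} = ∏ i, ENNReal.ofReal (w (v i) / ∑' x, w x)) :
    ∑' x, w x ≠ 0 := by
  intro hW
  have hnull (v : ι → U) : μ {ω | ∀ i, a i ω = v i} = 0 := by simp [hlaw, hW]
  have hcover : ⋃ v : ι → U, {ω | ∀ i, a i ω = v i} = Set.univ :=
    Set.eq_univ_of_forall fun ω ↦ Set.mem_iUnion.2 ⟨fun i ↦ a i ω, fun _ ↦ rfl⟩
  exact NeZero.ne (μ Set.univ) (hcover ▸ measure_iUnion_null hnull)

variable [IsProbabilityMeasure μ]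

theorem hasLaw_pi_proportionalMeasure {ι : Type*} [Fintype ι] [MeasurableSpace U]
    [MeasurableSingletonClass U] [IsProbabilityMeasure (proportionalMeasure w)] {a : ι → Ω → U}
    (hlaw : ∀ v : ι → U,
      μ {ω | ∀ i, a i ω = v i} = ∏ i, ENNReal.ofReal (w (v i) / ∑' x, w x)) :
    HasLaw (fun ω i ↦ a i ω) (Measure.pi fun _ ↦ proportionalMeasure w) μ := by
  refine hasLaw_of_measure_fiber_le (fun v ↦ ?_) (by simp)
  simp [Set.preimage, funext_iff, hlaw, proportionalMeasure_singleton]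

theorem averaged_pair_estimator_unbiased_general [DecidableEq U] (hw : ∀ x, 0 ≤ w x) {W : ℝ}
    (hW : HasSum w W) {m : ℕ} (hm : 2 ≤ m) {a : Fin m → Ω → U}
    (hlaw : ∀ v : Fin m → U,
      μ {ω | ∀ i, a i ω = v i} = ∏ i, ENNReal.ofReal (w (v i) / W)) :
    ∫ ω, (m.choose 2 : ℝ)⁻¹ * ∑ i, ∑ j ∈ Finset.Ioi i, pairEstimator w (a i ω) (a j ω) ∂μ =
      W⁻¹ := by
  obtain rfl := hW.tsum_eq
  let _ : MeasurableSpace U := ⊤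
  have : DiscreteMeasurableSpace U := ⟨fun _ ↦ trivial⟩
  have : Nonempty (Fin m) := ⟨⟨0, by lia⟩⟩
  have := isProbabilityMeasure_proportionalMeasure hw (tsum_ne_zero_of_proportional_law hlaw)
  have hpair {i j : Fin m} (hij : i < j) :=
    hasLaw_prodMk_of_hasLaw_pi (hasLaw_pi_proportionalMeasure hlaw) hij.ne
  exact integral_inv_choose_two_smul_sum_Ioi hm
    (fun _ _ hij ↦ integrable_pairEstimator hw (hpair hij))
    fun _ _ hij ↦ integral_pairEstimator hw (hpair hij)

end Samples

/-- For `m ≥ 2` i.i.d. proportional samples, the averaged pair estimator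
`Z = C(m,2)⁻¹ · Σ_{i<j} Y_{ij}` satisfies `E[Z] = 1/W`, i.e. the reciprocal of the
estimate `Ŵ = 1/Z` is an unbiased estimator of `1/W`. -/
theorem averaged_pair_estimator_unbiased
    {Ω U : Type*} [MeasurableSpace Ω] (μ : Measure Ω) [IsProbabilityMeasure μ]
    [Fintype U] [DecidableEq U]
    (n : ℕ) (hn : Fintype.card U = n)
    (w : U → ℝ) (hw : ∀ x, 0 < w x)
    (W : ℝ) (hW : W = ∑ x, w x)
    (m : ℕ) (hm : 2 ≤ m) (a : Fin m → Ω → U)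
    (hlaw : ∀ v : Fin m → U,
      μ {ω | ∀ i, a i ω = v i} = ∏ i, ENNReal.ofReal (w (v i) / W))
    (Y : Fin m → Fin m → Ω → ℝ)
    (hY : ∀ i j ω, Y i j ω = if a i ω = a j ω then (w (a i ω))⁻¹ else 0)
    (Z : Ω → ℝ)
    (hZ : ∀ ω, Z ω = ((m.choose 2 : ℝ))⁻¹ * ∑ i, ∑ j ∈ Finset.Ioi i, Y i j ω) :
    ∫ ω, Z ω ∂μ = W⁻¹ := by
  simp_rw [hZ, hY]
  exact averaged_pair_estimator_unbiased_general (fun x ↦ (hw x).le) (hW ▸ hasSum_fintype w) hm hlaw
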